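/- arXiv:math/0101146 — 3 statements merged into one kernel-verified Lean document; each statement's English description precedes it below -/
import Mathlib

section
/- Let B be a unital complex algebra, (M, E : M → B) a B-probability space, D ⊆ B a unital subalgebra, and F : B → D a conditional expectation. Let X₁, …, Xₙ ∈ M and assume that the B-valued cumulants of X₁, …, Xₙ satisfy k^{X₁,…,Xₙ}_{B; i₁,…,i_k}(d₁, …, d_{k−1}) ∈ D for all k ≥ 1, all indices i₁, …, i_k ∈ {1, …, n} and all d₁, …, d_{k−1} ∈ D. Then the D-valued cumulants of X₁, …, Xₙ, computed in the D-probability space (M, F∘E), are given by the restrictions of the B-valued cumulants: k^{X₁,…,Xₙ}_{D; i₁,…,i_k}(d₁, …, d_{k−1}) = k^{X₁,…,Xₙ}_{B; i₁,…,i_k}(d₁, …, d_{k−1}) for all d₁, …, d_{k−1} ∈ D. -/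
open scoped Classical

noncomputable section

namespace OVFree

variable {B M : Type*}

/-- `P` is a set partition of `{1, …, n}` (modelled on `Fin n`): its blocks are
nonempty and every point lies in exactly one block. -/
def IsPartition {n : ℕ} (P : Finset (Finset (Fin n))) : Prop :=
  (∀ t ∈ P, t.Nonempty) ∧ ∀ i : Fin n, ∃! t, t ∈ P ∧ i ∈ t

/-- A set partition is non-crossing if there are no `a < b < c < d` with `a, c` in one
block and `b, d` in a different block. -/
def IsNonCrossing {n : ℕ} (P : Finset (Finset (Fin n))) : Prop :=
  ∀ a b c d : Fin n, a < b → b < c → c < d →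
    ∀ t ∈ P, ∀ u ∈ P, a ∈ t → c ∈ t → b ∈ u → d ∈ u → t = u

/-- `NC n`: the (finite) set of non-crossing partitions of `{1, …, n}`. -/
def NC (n : ℕ) : Finset (Finset (Finset (Fin n))) :=
  Finset.univ.filter fun P => IsPartition P ∧ IsNonCrossing P

/-- `i` is the least element of its block of `P`. -/
def IsBlockMin {n : ℕ} (P : Finset (Finset (Fin n))) (i : Fin n) : Prop :=
  ∀ t ∈ P, i ∈ t → ∀ j ∈ t, i ≤ j

/-- `i` is the greatest element of its block of `P`. -/
def IsBlockMax {n : ℕ} (P : Finset (Finset (Fin n))) (i : Fin n) : Prop :=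
  ∀ t ∈ P, i ∈ t → ∀ j ∈ t, j ≤ i

section Brack

variable [Ring B] [Algebra ℂ B] [Ring M] [Algebra ℂ M]

/-- A multiplicative map `⟨⋯⟩ : ⋃ₙ Mⁿ → B` (tuples are encoded as lists): a sequence of
`ℂ`-multilinear maps which is `B`-balanced in the sense of Speicher.  Here `ι : B →ₐ[ℂ] M`
is the inclusion of `B` as a unital subalgebra of `M`. -/
structure MultiplicativeMap (ι : B →ₐ[ℂ] M) where
  toFun : List M → B
  map_add : ∀ (pre : List M) (x y : M) (post : List M),
    toFun (pre ++ (x + y) :: post) = toFun (pre ++ x :: post) + toFun (pre ++ y :: post)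
  map_smul : ∀ (pre : List M) (c : ℂ) (x : M) (post : List M),
    toFun (pre ++ (c • x) :: post) = c • toFun (pre ++ x :: post)
  B_left : ∀ (b : B) (x : M) (post : List M),
    toFun ((ι b * x) :: post) = b * toFun (x :: post)
  B_right : ∀ (pre : List M) (x : M) (b : B),
    toFun (pre ++ [x * ι b]) = toFun (pre ++ [x]) * b
  B_mid : ∀ (pre : List M) (x : M) (b : B) (y : M) (post : List M),
    toFun (pre ++ (x * ι b) :: y :: post) = toFun (pre ++ x :: (ι b * y) :: post)

/-- Auxiliary operation: multiply the most recently collected argument of an open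
bracket (arguments are stored in reverse order) on the right by `ι b`. -/
def closeArg (ι : B →ₐ[ℂ] M) (b : B) : List M → List M
  | [] => []
  | a :: t => (a * ι b) :: t

/-- One step of the evaluation of the bracketing `π⟨m₁, …, mₙ⟩`.  The state consists of a
stack of argument lists (in reverse order) for the currently open brackets, together with
the product of the values of the already closed outermost brackets.  When `i` is the least
element of its block a new bracket is opened; `m i` is appended to the innermost open
bracket; when `i` is the greatest element of its block the innermost bracket `⟨…⟩` is
evaluated via `κ` and its value is multiplied into the preceding argument of the enclosing
bracket (per the insertion rule), resp. into the outer product (per the disjoint-union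
rule). -/
def bracketingStep (κ : List M → B) (ι : B →ₐ[ℂ] M) {n : ℕ} (P : Finset (Finset (Fin n)))
    (m : Fin n → M) (s : List (List M) × B) (i : Fin n) : List (List M) × B :=
  let st₁ : List (List M) := if IsBlockMin P i then [] :: s.1 else s.1
  let st₂ : List (List M) :=
    match st₁ with
    | [] => []
    | ts :: rest => (m i :: ts) :: rest
  if IsBlockMax P i then
    match st₂ with
    | [] => ([], s.2)
    | ts :: rest =>
        let b := κ ts.reverse
        match rest with
        | [] => ([], s.2 * b)
        | us :: rest' => (closeArg ι b us :: rest', s.2)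
  else (st₂, s.2)

/-- The bracketing `π⟨m₁, …, mₙ⟩ ∈ B` determined by a non-crossing partition `P` and a
multiplicative map `κ`: each block of `P` is interpreted as a bracket `⟨⋯⟩`, inner blocks
being inserted (as elements of `B`) after the preceding element of the enclosing block,
and the values of the outermost brackets being multiplied in order. -/
def bracketing (κ : List M → B) (ι : B →ₐ[ℂ] M) {n : ℕ} (P : Finset (Finset (Fin n)))
    (m : Fin n → M) : B :=
  ((List.finRange n).foldl (bracketingStep κ ι P m) ([], 1)).2

/-- `κ` is the `B`-valued cumulant map `{⋯}_E` of the `B`-probability space `(M, E)`: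
a multiplicative map satisfying the moment–cumulant formula
`E(m₁ ⋯ mₙ) = Σ_{π ∈ NC(n)} π{m₁, …, mₙ}_E`. -/
def IsCumulantMap (ι : B →ₐ[ℂ] M) (E : M →ₗ[ℂ] B) (κ : MultiplicativeMap ι) : Prop :=
  ∀ (n : ℕ) (m : Fin n → M), 0 < n →
    E (((List.finRange n).map m).prod) = ∑ P ∈ NC n, bracketing κ.toFun ι P m

/-- The cumulant series `k_{i₁,…,i_{k+1}}(b₁, …, b_k) = {X_{i₁} b₁, …, X_{i_k} b_k, X_{i_{k+1}}}`
of a family `X₁, …, X_N` with respect to a multiplicative map `κ`. -/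
def cumulantSeries {ι : B →ₐ[ℂ] M} (κ : MultiplicativeMap ι) {N : ℕ} (X : Fin N → M)
    {k : ℕ} (i : Fin (k + 1) → Fin N) (b : Fin k → B) : B :=
  κ.toFun (((List.finRange k).map fun j => X (i j.castSucc) * ι (b j)) ++ [X (i (Fin.last k))])

/-- `E : M → B` is a conditional expectation onto the unital subalgebra `ι(B) ⊆ M`. -/
def IsCondExp (ι : B →ₐ[ℂ] M) (E : M →ₗ[ℂ] B) : Prop :=
  E 1 = 1 ∧ ∀ (b b' : B) (m : M), E (ι b * m * ι b') = b * E m * b'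

/-- The subalgebras `A₁, A₂ ⊆ M` are free with amalgamation (with respect to the
`D`-valued expectation `G`, `D` being a common subalgebra of `A₁` and `A₂`): any
alternating product of `G`-centered elements of `A₁` and `A₂` is `G`-centered. -/
def FreeWithAmalgamation (G : M → B) (A₁ A₂ : Subalgebra ℂ M) : Prop :=
  ∀ l : List (M × Bool), l ≠ [] →
    List.Chain' (fun p q : M × Bool => p.2 ≠ q.2) l →
    (∀ p ∈ l, p.1 ∈ (if p.2 then A₁ else A₂) ∧ G p.1 = 0) →
    G (l.map Prod.fst).prod = 0

end Brack

end OVFree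

open OVFree

/-! In the moment–cumulant formula for `m₁, …, mₙ` the partition `1ₙ` contributes the cumulant
`{m₁, …, mₙ}`, while every bracket of any other bracketing has fewer than `n` arguments. If all
`mⱼ` are of the form `X_i d` with `d ∈ D`, then so are the arguments of these inner brackets, and
by induction on `n` the bracketings of `π ≠ 1ₙ` take the same value in `D` for the `B`-valued as
for the `D`-valued cumulants. As `F` fixes `D`, applying it to the `B`-valued formula and comparing
with the `D`-valued one leaves `{m₁, …, mₙ}_{F∘E} = F {m₁, …, mₙ}_E`, and the right-hand side is
`{m₁, …, mₙ}_E` because that cumulant lies in `D`. -/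

namespace OVFree

section Partition

theorem IsPartition.eq_of_mem {n : ℕ} {P : Finset (Finset (Fin n))} (hP : IsPartition P)
    {t u : Finset (Fin n)} {i : Fin n} (ht : t ∈ P) (hu : u ∈ P) (hit : i ∈ t) (hiu : i ∈ u) :
    t = u :=
  (hP.2 i).unique ⟨ht, hit⟩ ⟨hu, hiu⟩

theorem IsPartition.isBlockMax_max' {n : ℕ} {P : Finset (Finset (Fin n))} (hP : IsPartition P)
    {t : Finset (Fin n)} (ht : t ∈ P) : IsBlockMax P (t.max' (hP.1 t ht)) := by
  intro u hu hmax j hj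
  obtain rfl := hP.eq_of_mem ht hu (t.max'_mem _) hmax
  exact t.le_max' j hj

theorem IsPartition.eq_singleton_univ {n : ℕ} {P : Finset (Finset (Fin n))} (hP : IsPartition P)
    {i : Fin n} (hi : ∀ t ∈ P, i ∈ t) : P = {Finset.univ} := by
  obtain ⟨t, ⟨ht, -⟩, -⟩ := hP.2 i
  have eq_t : ∀ u ∈ P, u = t := fun u hu => hP.eq_of_mem hu ht (hi u hu) (hi t ht)
  have t_eq_univ : t = Finset.univ := by
    refine Finset.eq_univ_of_forall fun j => ?_
    obtain ⟨u, ⟨hu, hj⟩, -⟩ := hP.2 j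
    exact eq_t u hu ▸ hj
  exact Finset.eq_singleton_iff_unique_mem.2 ⟨t_eq_univ ▸ ht, t_eq_univ ▸ eq_t⟩

theorem IsPartition.exists_isBlockMax_ne_last {k : ℕ} {P : Finset (Finset (Fin (k + 1)))}
    (hP : IsPartition P) (hne : P ≠ {Finset.univ}) : ∃ i ≠ Fin.last k, IsBlockMax P i := by
  obtain ⟨t, ht, hlast⟩ : ∃ t ∈ P, Fin.last k ∉ t := by
    by_contra! hall
    exact hne (hP.eq_singleton_univ hall)
  exact ⟨_, fun hmax => hlast (hmax ▸ t.max'_mem _), hP.isBlockMax_max' ht⟩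

theorem isBlockMin_singleton_univ {k : ℕ} {i : Fin (k + 1)} :
    IsBlockMin {Finset.univ} i ↔ i = 0 := by
  have iff_isBot : IsBlockMin {Finset.univ} i ↔ IsBot i := by simp [IsBlockMin, IsBot]
  rw [iff_isBot, isBot_iff_eq_bot, bot_eq_zero]

theorem isBlockMax_singleton_univ {k : ℕ} {i : Fin (k + 1)} :
    IsBlockMax {Finset.univ} i ↔ i = Fin.last k := by
  have iff_isTop : IsBlockMax {Finset.univ} i ↔ IsTop i := by simp [IsBlockMax, IsTop]
  rw [iff_isTop, isTop_iff_eq_top, Fin.top_eq_last]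

theorem singleton_univ_mem_NC (k : ℕ) :
    ({Finset.univ} : Finset (Finset (Fin (k + 1)))) ∈ NC (k + 1) := by
  refine Finset.mem_filter.2 ⟨Finset.mem_univ _, ⟨by simp, fun i => ?_⟩, ?_⟩
  · exact ⟨Finset.univ, by simp, fun t ht => Finset.mem_singleton.1 ht.1⟩
  · intro a b c d _ _ _ t ht u hu _ _ _ _
    exact (Finset.mem_singleton.1 ht).trans (Finset.mem_singleton.1 hu).symm

theorem exists_finRange_eq_append_cons {n : ℕ} (i : Fin n) :
    ∃ l₁ l₂ : List (Fin n), List.finRange n = l₁ ++ i :: l₂ ∧ l₁.length = i := by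
  refine ⟨(List.finRange n).take i, (List.finRange n).drop (i + 1), ?_, ?_⟩
  · conv_lhs => rw [← List.take_append_drop i (List.finRange n)]
    rw [List.drop_eq_getElem_cons (List.length_finRange.symm ▸ i.2), List.getElem_finRange]
    rfl
  · rw [List.length_take, List.length_finRange, min_eq_left i.2.le]

end Partition

section Stack

variable {M : Type*} {n : ℕ} {P : Finset (Finset (Fin n))} {i : Fin n} {S : Set M} {N N' : ℕ}
  {ts : List M} {st rest : List (List M)}

/-- The open brackets just before the argument at `i` is collected: a new empty one is on top of
the stack exactly when `i` starts its block. -/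
def openBracket (P : Finset (Finset (Fin n))) (i : Fin n) (st : List (List M)) : List (List M) :=
  if IsBlockMin P i then [] :: st else st

/-- The open brackets `st` hold at most `N` collected arguments in total, all of them in `S`. -/
structure IsStackIn (S : Set M) (N : ℕ) (st : List (List M)) : Prop where
  mem : ∀ x ∈ st.flatten, x ∈ S
  length_le : st.flatten.length ≤ N

theorem isStackIn_nil : IsStackIn S N [] :=
  ⟨fun _ hx => absurd hx List.not_mem_nil, N.zero_le⟩

theorem IsStackIn.mono (hst : IsStackIn S N st) (h : N ≤ N') : IsStackIn S N' st :=
  ⟨hst.mem, hst.length_le.trans h⟩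

theorem IsStackIn.head (hst : IsStackIn S N (ts :: rest)) : (∀ x ∈ ts, x ∈ S) ∧ ts.length ≤ N :=
  ⟨fun x hx => hst.mem x (List.mem_append_left _ hx),
    (List.sublist_append_left ts rest.flatten).length_le.trans hst.length_le⟩

theorem IsStackIn.tail (hst : IsStackIn S N (ts :: rest)) : IsStackIn S N rest :=
  ⟨fun x hx => hst.mem x (List.mem_append_right ts hx),
    (List.sublist_append_right ts rest.flatten).length_le.trans hst.length_le⟩

theorem IsStackIn.collect (hst : IsStackIn S N (ts :: rest)) {x : M} (hx : x ∈ S) :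
    IsStackIn S (N + 1) ((x :: ts) :: rest) :=
  ⟨List.forall_mem_cons.2 ⟨hx, hst.mem⟩, Nat.succ_le_succ hst.length_le⟩

theorem isStackIn_openBracket (hst : IsStackIn S N st) : IsStackIn S N (openBracket P i st) := by
  unfold openBracket
  split_ifs
  exacts [⟨hst.mem, hst.length_le⟩, hst]

/-- Up to `φ`, the values of `κC` and `κ` agree on the nonempty tuples of at most `N` elements
of `S`. -/
def LiftsUpTo {B C : Type*} (φ : C → B) (κC : List M → C) (κ : List M → B) (S : Set M)
    (N : ℕ) : Prop :=
  ∀ l : List M, l ≠ [] → (∀ x ∈ l, x ∈ S) → l.length ≤ N → φ (κC l) = κ l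

theorem LiftsUpTo.mono {B C : Type*} {φ : C → B} {κC : List M → C} {κ : List M → B}
    (hκ : LiftsUpTo φ κC κ S N') (h : N ≤ N') : LiftsUpTo φ κC κ S N :=
  fun l hne hmem hlen => hκ l hne hmem (hlen.trans h)

end Stack

variable {B C M : Type*} [Ring B] [Algebra ℂ B] [Ring C] [Algebra ℂ C] [Ring M] [Algebra ℂ M]

section BracketingStep

variable {n : ℕ} {P : Finset (Finset (Fin n))} {i : Fin n} {m : Fin n → M}
  {κ : List M → B} {ι : B →ₐ[ℂ] M} {st rest : List (List M)} {ts : List M} {b : B}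

/-- The state reached by evaluating the innermost bracket, whose arguments `ts` are stored in
reverse order, while the brackets `rest` around it remain open. -/
def closeBracket (κ : List M → B) (ι : B →ₐ[ℂ] M) (ts : List M) (rest : List (List M)) (b : B) :
    List (List M) × B :=
  match rest with
  | [] => ([], b * κ ts.reverse)
  | us :: rest' => (closeArg ι (κ ts.reverse) us :: rest', b)

theorem bracketingStep_of_openBracket_eq_nil (h : openBracket P i st = []) :
    bracketingStep κ ι P m (st, b) i = ([], b) := by
  unfold openBracket at h
  simp only [bracketingStep, h, ite_self]

theorem bracketingStep_of_isBlockMax (h : openBracket P i st = ts :: rest) (hi : IsBlockMax P i) :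
    bracketingStep κ ι P m (st, b) i = closeBracket κ ι (m i :: ts) rest b := by
  unfold openBracket at h
  cases rest <;> simp only [bracketingStep, closeBracket, h, if_pos hi]

theorem bracketingStep_of_not_isBlockMax (h : openBracket P i st = ts :: rest)
    (hi : ¬ IsBlockMax P i) :
    bracketingStep κ ι P m (st, b) i = ((m i :: ts) :: rest, b) := by
  unfold openBracket at h
  simp only [bracketingStep, h, if_neg hi]

end BracketingStep

section FullBlock

variable {κ : List M → B} {ι : B →ₐ[ℂ] M}

theorem foldl_bracketingStep_of_forall_interior {n : ℕ} {P : Finset (Finset (Fin n))}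
    {m : Fin n → M} {b : B} (l : List (Fin n))
    (hl : ∀ i ∈ l, ¬ IsBlockMin P i ∧ ¬ IsBlockMax P i) (ts : List M) :
    l.foldl (bracketingStep κ ι P m) ([ts], b) = ([(l.map m).reverse ++ ts], b) := by
  induction l generalizing ts with
  | nil => rfl
  | cons i l ih =>
    obtain ⟨⟨hmin, hmax⟩, hl⟩ := List.forall_mem_cons.1 hl
    rw [List.foldl_cons, bracketingStep_of_not_isBlockMax (if_neg hmin) hmax, ih hl]
    simp only [List.map_cons, List.reverse_cons, List.append_assoc, List.singleton_append]

theorem bracketing_singleton_univ {k : ℕ} (m : Fin (k + 1) → M) :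
    bracketing κ ι {Finset.univ} m = κ ((List.finRange (k + 1)).map m) := by
  have step_last (st : List (List M)) (ts : List M)
      (h : openBracket {Finset.univ} (Fin.last k) st = [ts]) :
      bracketingStep κ ι {Finset.univ} m (st, 1) (Fin.last k) =
        ([], κ (m (Fin.last k) :: ts).reverse) := by
    rw [bracketingStep_of_isBlockMax h (isBlockMax_singleton_univ.2 rfl), closeBracket, one_mul]
  cases k with
  | zero =>
    exact congrArg Prod.snd (step_last [] [] (if_pos (isBlockMin_singleton_univ.2 rfl)))
  | succ k =>
    have split : List.finRange (k + 2) =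
        0 :: ((List.finRange k).map fun j => j.castSucc.succ) ++ [Fin.last (k + 1)] := by
      rw [List.finRange_succ, List.finRange_succ_last, List.map_append, List.map_map]
      rfl
    have interior : ∀ i ∈ (List.finRange k).map fun j => j.castSucc.succ,
        ¬ IsBlockMin {Finset.univ} i ∧ ¬ IsBlockMax {Finset.univ} i := by
      refine List.forall_mem_map.2 fun j _ => ⟨?_, ?_⟩
      · exact isBlockMin_singleton_univ.not.2 (Fin.succ_ne_zero _)
      · exact isBlockMax_singleton_univ.not.2 (Fin.succ_inj.not.2 j.castSucc_lt_last.ne)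
    have hzero : openBracket {Finset.univ} (0 : Fin (k + 2)) ([] : List (List M)) = [[]] :=
      if_pos (isBlockMin_singleton_univ.2 rfl)
    rw [bracketing, split, List.cons_append, List.foldl_cons, List.foldl_append,
      bracketingStep_of_not_isBlockMax hzero (by simp [isBlockMax_singleton_univ, Fin.ext_iff]),
      foldl_bracketingStep_of_forall_interior _ interior, List.foldl_cons, List.foldl_nil,
      step_last _ _ (if_neg (by simp [isBlockMin_singleton_univ]))]
    simp

theorem IsCumulantMap.apply_prod {E : M →ₗ[ℂ] B} {κ : MultiplicativeMap ι}
    (hκ : IsCumulantMap ι E κ) {k : ℕ} (m : Fin (k + 1) → M) :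
    E ((List.finRange (k + 1)).map m).prod = κ.toFun ((List.finRange (k + 1)).map m) +
      ∑ P ∈ (NC (k + 1)).erase {Finset.univ}, bracketing κ.toFun ι P m := by
  rw [hκ (k + 1) m k.succ_pos, ← Finset.add_sum_erase _ _ (singleton_univ_mem_NC k),
    bracketing_singleton_univ]

end FullBlock

section Transport

variable {n : ℕ} {P : Finset (Finset (Fin n))} {m : Fin n → M} {i : Fin n} {S : Set M} {N : ℕ}

section StackInvariant

variable {ι : B →ₐ[ℂ] M} {κ : List M → B}

theorem isStackIn_closeBracket (hS : ∀ x ∈ S, ∀ b, x * ι b ∈ S) {rest : List (List M)}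
    (hrest : IsStackIn S N rest) (ts : List M) (b : B) :
    IsStackIn S N (closeBracket κ ι ts rest b).1 := by
  match rest, hrest with
  | [], hrest => exact hrest
  | [] :: _, hrest => exact hrest
  | (a :: us) :: rest', hrest =>
    obtain ⟨ha, hmem⟩ := List.forall_mem_cons.1 hrest.mem
    exact ⟨List.forall_mem_cons.2 ⟨hS a ha _, hmem⟩, hrest.length_le⟩

theorem isStackIn_bracketingStep_of_isBlockMax (hS : ∀ x ∈ S, ∀ b, x * ι b ∈ S)
    (hi : IsBlockMax P i) {s : List (List M) × B} (hs : IsStackIn S N s.1) :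
    IsStackIn S N (bracketingStep κ ι P m s i).1 := by
  obtain ⟨st, b⟩ := s
  have hopen : IsStackIn S N (openBracket P i st) := isStackIn_openBracket hs
  rcases h : openBracket P i st with _ | ⟨ts, rest⟩
  · rw [bracketingStep_of_openBracket_eq_nil h]
    exact isStackIn_nil
  · rw [bracketingStep_of_isBlockMax h hi]
    exact isStackIn_closeBracket hS (h ▸ hopen).tail _ _

theorem isStackIn_bracketingStep (hS : ∀ x ∈ S, ∀ b, x * ι b ∈ S) (hm : m i ∈ S)
    {s : List (List M) × B} (hs : IsStackIn S N s.1) :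
    IsStackIn S (N + 1) (bracketingStep κ ι P m s i).1 := by
  by_cases hi : IsBlockMax P i
  · exact (isStackIn_bracketingStep_of_isBlockMax hS hi hs).mono N.le_succ
  obtain ⟨st, b⟩ := s
  have hopen : IsStackIn S N (openBracket P i st) := isStackIn_openBracket hs
  rcases h : openBracket P i st with _ | ⟨ts, rest⟩
  · rw [bracketingStep_of_openBracket_eq_nil h]
    exact isStackIn_nil
  · rw [bracketingStep_of_not_isBlockMax h hi]
    exact (h ▸ hopen).collect hm

theorem isStackIn_foldl_bracketingStep (hS : ∀ x ∈ S, ∀ b, x * ι b ∈ S) (hm : ∀ i, m i ∈ S)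
    (l : List (Fin n)) {s : List (List M) × B} (hs : IsStackIn S N s.1) :
    IsStackIn S (N + l.length) (l.foldl (bracketingStep κ ι P m) s).1 := by
  induction l generalizing N s with
  | nil => exact hs
  | cons i l ih =>
    rw [List.length_cons, add_comm l.length, ← add_assoc]
    exact ih (isStackIn_bracketingStep hS (hm i) hs)

end StackInvariant

variable {φ : C →ₐ[ℂ] B} {κC : List M → C} {κ : List M → B} {ι : B →ₐ[ℂ] M}

theorem closeBracket_map {ts : List M} (h : φ (κC ts.reverse) = κ ts.reverse)
    (rest : List (List M)) (c : C) :
    closeBracket κ ι ts rest (φ c) =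
      Prod.map id φ (closeBracket κC (ι.comp φ) ts rest c) := by
  match rest with
  | [] => simp [closeBracket, h]
  | [] :: _ => rfl
  | (_ :: _) :: _ => simp [closeBracket, closeArg, h]

theorem LiftsUpTo.bracketingStep_map (hκ : LiftsUpTo φ κC κ S (N + 1)) (hm : m i ∈ S)
    {s : List (List M) × C} (hs : IsStackIn S N s.1) :
    bracketingStep κ ι P m (Prod.map id φ s) i =
      Prod.map id φ (bracketingStep κC (ι.comp φ) P m s i) := by
  obtain ⟨st, c⟩ := s
  have hopen : IsStackIn S N (openBracket P i st) := isStackIn_openBracket hs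
  rcases h : openBracket P i st with _ | ⟨ts, rest⟩
  · rw [bracketingStep_of_openBracket_eq_nil h]
    exact bracketingStep_of_openBracket_eq_nil h
  by_cases hi : IsBlockMax P i
  · have collected : (∀ x ∈ m i :: ts, x ∈ S) ∧ (m i :: ts).length ≤ N + 1 :=
      ((h ▸ hopen).collect hm).head
    have hκts : φ (κC (m i :: ts).reverse) = κ (m i :: ts).reverse :=
      hκ _ (by simp) (fun x hx => collected.1 x (List.mem_reverse.1 hx))
        (List.length_reverse.trans_le collected.2)
    rw [bracketingStep_of_isBlockMax h hi, ← closeBracket_map hκts]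
    exact bracketingStep_of_isBlockMax h hi
  · rw [bracketingStep_of_not_isBlockMax h hi]
    exact bracketingStep_of_not_isBlockMax h hi

theorem LiftsUpTo.foldl_bracketingStep_map (hS : ∀ x ∈ S, ∀ c, x * ι (φ c) ∈ S)
    (hm : ∀ i, m i ∈ S) (l : List (Fin n)) (hκ : LiftsUpTo φ κC κ S (N + l.length))
    {s : List (List M) × C} (hs : IsStackIn S N s.1) :
    l.foldl (bracketingStep κ ι P m) (Prod.map id φ s) =
      Prod.map id φ (l.foldl (bracketingStep κC (ι.comp φ) P m) s) := by
  induction l generalizing N s with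
  | nil => rfl
  | cons i l ih =>
    rw [List.length_cons] at hκ
    rw [List.foldl_cons, List.foldl_cons, (hκ.mono (by omega)).bracketingStep_map (hm i) hs]
    exact ih (hκ.mono (by omega)) (isStackIn_bracketingStep (ι := ι.comp φ) hS (hm i) hs)

/- The maximum `i` of a block avoiding the last point closes a bracket before all the arguments
have been collected, so that no bracket ever holds all `k + 1` of them. -/
theorem LiftsUpTo.map_bracketing {k : ℕ} {P : Finset (Finset (Fin (k + 1)))}
    {m : Fin (k + 1) → M} (hκ : LiftsUpTo φ κC κ S k) (hS : ∀ x ∈ S, ∀ c, x * ι (φ c) ∈ S)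
    (hm : ∀ i, m i ∈ S) (hP : IsPartition P) (hne : P ≠ {Finset.univ}) :
    φ (bracketing κC (ι.comp φ) P m) = bracketing κ ι P m := by
  obtain ⟨i, hi_ne, hi⟩ := hP.exists_isBlockMax_ne_last hne
  have hik : (i : ℕ) < k := Fin.val_lt_last hi_ne
  obtain ⟨l₁, l₂, split, hl₁⟩ := exists_finRange_eq_append_cons i
  have hlen : k + 1 = l₁.length + (l₂.length + 1) := by
    simpa only [List.length_finRange, List.length_append, List.length_cons] using
      congrArg List.length split
  set s₁ := l₁.foldl (bracketingStep κC (ι.comp φ) P m) ([], 1)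
  have hs₁ : IsStackIn S l₁.length s₁.1 :=
    zero_add l₁.length ▸ isStackIn_foldl_bracketingStep (ι := ι.comp φ) hS hm l₁ isStackIn_nil
  have hs₂ : IsStackIn S l₁.length (bracketingStep κC (ι.comp φ) P m s₁ i).1 :=
    isStackIn_bracketingStep_of_isBlockMax (ι := ι.comp φ) hS hi hs₁
  have hinit : (([], 1) : List (List M) × B) = Prod.map id φ ([], 1) := by simp
  simp only [bracketing, split, List.foldl_append, List.foldl_cons]
  rw [hinit,
    (hκ.mono (by omega : 0 + l₁.length ≤ k)).foldl_bracketingStep_map hS hm l₁ isStackIn_nil,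
    (hκ.mono (by omega)).bracketingStep_map (hm i) hs₁,
    (hκ.mono (by omega)).foldl_bracketingStep_map hS hm l₂ hs₂]
  rfl

end Transport

section Restriction

variable {ι : B →ₐ[ℂ] M} {φ : C →ₐ[ℂ] B} {E : M →ₗ[ℂ] B} {F : B →ₗ[ℂ] C}
  {κ : MultiplicativeMap ι} {κC : MultiplicativeMap (ι.comp φ)}

theorem IsCumulantMap.toFun_eq_of_liftsUpTo (hF : ∀ c, F (φ c) = c) (hκ : IsCumulantMap ι E κ)
    (hκC : IsCumulantMap (ι.comp φ) (F ∘ₗ E) κC) {S : Set M}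
    (hS : ∀ x ∈ S, ∀ c, x * ι (φ c) ∈ S) {k : ℕ}
    (hlift : LiftsUpTo φ κC.toFun κ.toFun S k) {m : Fin (k + 1) → M} (hm : ∀ i, m i ∈ S) :
    κC.toFun ((List.finRange (k + 1)).map m) = F (κ.toFun ((List.finRange (k + 1)).map m)) := by
  have bracketing_eq : ∀ P ∈ (NC (k + 1)).erase {Finset.univ},
      F (bracketing κ.toFun ι P m) = bracketing κC.toFun (ι.comp φ) P m := by
    intro P hP
    obtain ⟨hne, hNC⟩ := Finset.mem_erase.1 hP
    rw [← hlift.map_bracketing hS hm (Finset.mem_filter.1 hNC).2.1 hne, hF]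
  have moment := hκC.apply_prod m
  rw [LinearMap.comp_apply, hκ.apply_prod m, map_add, map_sum,
    Finset.sum_congr rfl bracketing_eq] at moment
  exact (add_right_cancel moment).symm

theorem IsCumulantMap.liftsUpTo (hF : ∀ c, F (φ c) = c) (hκ : IsCumulantMap ι E κ)
    (hκC : IsCumulantMap (ι.comp φ) (F ∘ₗ E) κC) {S : Set M}
    (hS : ∀ x ∈ S, ∀ c, x * ι (φ c) ∈ S)
    (hrange : ∀ l : List M, l ≠ [] → (∀ x ∈ l, x ∈ S) → κ.toFun l ∈ φ.range) (N : ℕ) :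
    LiftsUpTo φ κC.toFun κ.toFun S N := by
  induction N with
  | zero =>
    intro l hne _ hlen
    exact absurd (List.length_eq_zero_iff.1 (Nat.le_zero.1 hlen)) hne
  | succ k ih =>
    intro l hne hl hlen
    rcases hlen.lt_or_eq with hlt | heq
    · exact ih l hne hl (Nat.lt_succ_iff.1 hlt)
    obtain ⟨m, rfl⟩ : ∃ m : Fin (k + 1) → M, (List.finRange (k + 1)).map m = l :=
      heq ▸ ⟨l.get, List.map_get_finRange l⟩
    obtain ⟨c, hc⟩ := hrange _ hne hl
    have hm : ∀ i, m i ∈ S := fun i => hl _ (List.mem_map_of_mem (List.mem_finRange i))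
    rw [hκ.toFun_eq_of_liftsUpTo hF hκC hS ih hm, ← hc]
    exact congrArg φ (hF c)

/-- The elements `X j * b`, i.e. the possible arguments of the cumulant series of `X`. -/
def rightTranslates (ι : B →ₐ[ℂ] M) {I : Type*} (X : I → M) : Set M :=
  Set.range fun p : I × B => X p.1 * ι p.2

theorem mul_mem_rightTranslates {I : Type*} {X : I → M} :
    ∀ x ∈ rightTranslates ι X, ∀ b, x * ι b ∈ rightTranslates ι X := by
  rintro _ ⟨⟨j, b'⟩, rfl⟩ b
  exact ⟨(j, b' * b), by simp only [map_mul, mul_assoc]⟩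

theorem forall_mem_rightTranslates_cumulantSeries_args {N k : ℕ} (X : Fin N → M)
    (i : Fin (k + 1) → Fin N) (b : Fin k → B) :
    ∀ x ∈ ((List.finRange k).map fun j => X (i j.castSucc) * ι (b j)) ++ [X (i (Fin.last k))],
      x ∈ rightTranslates ι X := by
  refine List.forall_mem_append.2 ⟨List.forall_mem_map.2 fun j _ => ⟨(_, b j), rfl⟩, ?_⟩
  exact List.forall_mem_singleton.2 ⟨(i (Fin.last k), 1), by simp only [map_one, mul_one]⟩

theorem MultiplicativeMap.exists_toFun_eq_cumulantSeries_mul (κ : MultiplicativeMap ι)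
    (φ : C →ₐ[ℂ] B) {N : ℕ} {X : Fin N → M} {l : List M} (hne : l ≠ [])
    (hl : ∀ x ∈ l, x ∈ rightTranslates (ι.comp φ) X) :
    ∃ (k : ℕ) (i : Fin (k + 1) → Fin N) (c : Fin k → C) (c' : C),
      κ.toFun l = cumulantSeries κ X i (fun j => φ (c j)) * φ c' := by
  obtain ⟨l, x, rfl⟩ := (List.eq_nil_or_concat' l).resolve_left hne
  obtain ⟨hinit, hlast⟩ := List.forall_mem_append.1 hl
  obtain ⟨⟨j₀, c'⟩, rfl⟩ := List.forall_mem_singleton.1 hlast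
  choose p hp using fun j : Fin l.length => hinit _ (l.get_mem j)
  refine ⟨l.length, Fin.snoc (fun j => (p j).1) j₀, fun j => (p j).2, c', ?_⟩
  have map_eq : ((List.finRange l.length).map fun j => X (p j).1 * ι (φ (p j).2)) = l :=
    (List.map_congr_left fun j _ => hp j).trans (List.map_get_finRange l)
  simp only [cumulantSeries, Fin.snoc_castSucc, Fin.snoc_last, map_eq]
  exact κ.B_right l (X j₀) (φ c')

end Restriction

end OVFree

theorem cumulants_restrict_to_subalgebra_general
    {B M : Type*} [Ring B] [Algebra ℂ B] [Ring M] [Algebra ℂ M]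
    (ι : B →ₐ[ℂ] M) (E : M →ₗ[ℂ] B) (D : Subalgebra ℂ B)
    (F : B →ₗ[ℂ] D) (hF : ∀ d : D, F d = d)
    (κ : MultiplicativeMap ι) (hκ : IsCumulantMap ι E κ)
    (κD : MultiplicativeMap (ι.comp D.val)) (hκD : IsCumulantMap (ι.comp D.val) (F ∘ₗ E) κD)
    {N : ℕ} (X : Fin N → M)
    (hrestr : ∀ (k : ℕ) (i : Fin (k + 1) → Fin N) (d : Fin k → D),
      cumulantSeries κ X i (fun j => (d j : B)) ∈ D)
    (k : ℕ) (i : Fin (k + 1) → Fin N) (d : Fin k → D) :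
    ((cumulantSeries κD X i d : D) : B) = cumulantSeries κ X i (fun j => (d j : B)) := by
  have hrange : ∀ l : List M, l ≠ [] → (∀ x ∈ l, x ∈ rightTranslates (ι.comp D.val) X) →
      κ.toFun l ∈ D.val.range := by
    intro l hne hl
    obtain ⟨k, i, d, d', hκl⟩ := κ.exists_toFun_eq_cumulantSeries_mul D.val hne hl
    rw [D.range_val, hκl]
    exact D.mul_mem (hrestr k i d) d'.2
  exact hκ.liftsUpTo hF hκD mul_mem_rightTranslates hrange _ _ (by simp)
    (forall_mem_rightTranslates_cumulantSeries_args X i d) le_rfl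

/-- Let `(M, E : M → B)` be a `B`-probability space (with `ι : B → M` the
inclusion of `B` as a unital subalgebra), `D ⊆ B` a unital subalgebra and `F : B → D` a
conditional expectation, so that `(M, F∘E)` is a `D`-probability space (`ED` is `F∘E`,
viewed as a map into `D`).  Let `κ` be the `B`-valued and `κD` the `D`-valued cumulant map.
If the `B`-valued cumulants of `X₁, …, X_N` satisfy
`k_{B;i₁,…,i_k}(d₁, …, d_{k−1}) ∈ D` for all `d₁, …, d_{k−1} ∈ D`, then the `D`-valued
cumulants of `X₁, …, X_N` are the restrictions of the `B`-valued ones: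
`k_{D;i₁,…,i_k}(d₁, …, d_{k−1}) = k_{B;i₁,…,i_k}(d₁, …, d_{k−1})` for all `dⱼ ∈ D`. -/
theorem cumulants_restrict_to_subalgebra
    {B M : Type*} [Ring B] [Algebra ℂ B] [Ring M] [Algebra ℂ M]
    (ι : B →ₐ[ℂ] M) (hι : Function.Injective ι)
    (E : M →ₗ[ℂ] B) (hE : IsCondExp ι E)
    (D : Subalgebra ℂ B)
    (F : B →ₗ[ℂ] B) (hFD : ∀ b, F b ∈ D) (hFid : ∀ d ∈ D, F d = d)
    (hFbimod : ∀ d ∈ D, ∀ d' ∈ D, ∀ b : B, F (d * b * d') = d * F b * d')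
    (ED : M →ₗ[ℂ] ↥D) (hED : ∀ m : M, (ED m : B) = F (E m))
    (κ : MultiplicativeMap ι) (hκ : IsCumulantMap ι E κ)
    (κD : MultiplicativeMap (ι.comp D.val)) (hκD : IsCumulantMap (ι.comp D.val) ED κD)
    {N : ℕ} (X : Fin N → M)
    (hrestr : ∀ (k : ℕ) (i : Fin (k + 1) → Fin N) (d : Fin k → ↥D),
      cumulantSeries κ X i (fun j => (d j : B)) ∈ D) :
    ∀ (k : ℕ) (i : Fin (k + 1) → Fin N) (d : Fin k → ↥D),
      ((cumulantSeries κD X i d : ↥D) : B) = cumulantSeries κ X i (fun j => (d j : B)) := by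
  obtain rfl : ED = F.codRestrict D.toSubmodule hFD ∘ₗ E :=
    LinearMap.ext fun m => Subtype.ext (hED m)
  exact cumulants_restrict_to_subalgebra_general ι E D (F.codRestrict D.toSubmodule hFD)
    (fun d => Subtype.ext (hFid d d.2)) κ hκ κD hκD X hrestr
end
end

section
/- Let M be a unital complex algebra, N ⊆ M a subalgebra, and B ⊆ C ⊆ D ⊆ M unital subalgebras, with conditional expectations E_B : M → B, E_C : M → C, E_D : M → D satisfying E_B = E_B∘E_C and E_C = E_C∘E_D. Assume the faithfulness conditions: (i) if c ∈ C and E_B(c c′) = 0 for all c′ ∈ C, then c = 0; (ii) if d ∈ D and E_C(d d′) = 0 for all d′ ∈ D, then d = 0; (iii) if m ∈ M and E_D(m m′) = 0 for all m′ ∈ M, then m = 0. If N is free from C with amalgamation over B (with respect to E_B) and N is free from D with amalgamation over C (with respect to E_C), then N is free from D with amalgamation over B (with respect to E_B). -/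
open scoped Classical

noncomputable section

open OVFree

/-!
Let `A` be the algebra generated by `N` and `B`. An `E_B`-centered element of `D` is the sum of an
`E_B`-centered element of `C` and an `E_C`-centered element of `D`. Expand an alternating word in
`E_B`-centered elements of `A` and `D` accordingly, and group each stretch between two
`E_C`-centered letters from `D` into a word `r` in `E_B`-centered elements of `A` and `C`. If `r`
ends in `A`, freeness over `B` gives `E_B (r c) = 0` for all `c ∈ C`, so `E_C r = 0` by
faithfulness of `E_B` on `C`; as `E_C` is `C`-linear, a further factor from `C` does no harm.
Apart from the single `E_B`-centered letters from `C`, the expanded words are thus alternating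
words in `E_C`-centered elements of `N ⊔ C` and `D`, up to a right factor from `C`, and freeness
over `C` applies.

For the spans of the words, the expansion is a computation in the ordered semiring of submodules,
whose addition is the supremum.
-/

section AlternatingSpan

variable {R A : Type*} [CommSemiring R] [Semiring A] [Algebra R A]

/-- The submodule spanned by the alternating products of `n` factors from `S` and `T` whose last
factor, if there is one, lies in `S`. -/
def alternatingPow : Submodule R A → Submodule R A → ℕ → Submodule R A
  | _, _, 0 => 1
  | S, T, n + 1 => alternatingPow T S n * S

/-- The submodule spanned by the alternating products of factors from `S` and `T` whose last factor
lies in `S`. The empty product is included, so that these are exactly the alternating products that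
a factor from `T` may follow. -/
def alternatingSpan (S T : Submodule R A) : Submodule R A :=
  ⨆ n, alternatingPow S T n

theorem alternatingSpan_eq (S T : Submodule R A) :
    alternatingSpan S T = 1 ⊔ alternatingSpan T S * S := by
  rw [alternatingSpan, ← sup_iSup_nat_succ, alternatingSpan, Submodule.iSup_mul]
  rfl

theorem one_le_alternatingSpan (S T : Submodule R A) : 1 ≤ alternatingSpan S T :=
  le_sup_left.trans_eq (alternatingSpan_eq S T).symm

theorem alternatingSpan_mul_le (S T : Submodule R A) :
    alternatingSpan T S * S ≤ alternatingSpan S T :=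
  le_sup_right.trans_eq (alternatingSpan_eq S T).symm

theorem alternatingSpan_le {S T X : Submodule R A} (hX : 1 ⊔ (1 ⊔ X * T) * S ≤ X) :
    alternatingSpan S T ≤ X := by
  suffices h : ∀ n, alternatingPow S T n ≤ X ∧ alternatingPow T S n ≤ 1 ⊔ X * T from
    iSup_le fun n => (h n).1
  intro n
  induction n with
  | zero => exact ⟨le_sup_left.trans hX, le_sup_left⟩
  | succ n ih =>
    exact ⟨(mul_le_mul_left ih.2 S).trans (le_sup_right.trans hX),
      (mul_le_mul_left ih.1 T).trans le_sup_right⟩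

theorem alternatingSpan_le_mul_of_le_sup {S T U P T' : Submodule R A} (hT' : T' ≤ T ⊔ U)
    (hP : alternatingSpan T S * S ≤ P) :
    alternatingSpan T' S ≤ alternatingSpan U P * alternatingSpan T S := by
  set V := alternatingSpan U P
  set W := alternatingSpan T S
  have hV : V ≤ V * W := le_mul_of_one_le_right' (one_le_alternatingSpan T S)
  have hV1 : 1 ≤ V := one_le_alternatingSpan U P
  have hT : (1 ⊔ V * W * S) * T ≤ V * W := calc
    (1 ⊔ V * W * S) * T ≤ (V ⊔ V * W * S) * T := by gcongr
    _ = V * (alternatingSpan S T * T) := by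
      rw [alternatingSpan_eq S T, ← mul_assoc, Submodule.mul_sup, mul_one, mul_assoc V W S]
    _ ≤ V * W := by gcongr; exact alternatingSpan_mul_le T S
  have hU : (1 ⊔ V * W * S) * U ≤ V := calc
    (1 ⊔ V * W * S) * U ≤ (1 ⊔ V * P) * U := by rw [mul_assoc V]; gcongr
    _ = alternatingSpan P U * U := by rw [alternatingSpan_eq P U]
    _ ≤ V := alternatingSpan_mul_le U P
  refine alternatingSpan_le (sup_le (hV1.trans hV) ?_)
  calc (1 ⊔ V * W * S) * T' ≤ (1 ⊔ V * W * S) * (T ⊔ U) := by gcongr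
    _ = (1 ⊔ V * W * S) * T ⊔ (1 ⊔ V * W * S) * U := Submodule.mul_sup _ _ _
    _ ≤ V * W := sup_le hT (hU.trans hV)

theorem alternatingSpan_le_toSubmodule {S T : Submodule R A} {P : Subalgebra R A}
    (hS : S ≤ Subalgebra.toSubmodule P) (hT : T ≤ Subalgebra.toSubmodule P) :
    alternatingSpan S T ≤ Subalgebra.toSubmodule P := by
  have hP : Subalgebra.toSubmodule P * Subalgebra.toSubmodule P = Subalgebra.toSubmodule P :=
    P.isIdempotentElem_toSubmodule
  have h1 : 1 ≤ Subalgebra.toSubmodule P := Submodule.one_le.2 P.one_mem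
  refine alternatingSpan_le (sup_le h1 ?_)
  calc (1 ⊔ Subalgebra.toSubmodule P * T) * S
      ≤ (1 ⊔ Subalgebra.toSubmodule P * Subalgebra.toSubmodule P) * Subalgebra.toSubmodule P := by
        gcongr
    _ = Subalgebra.toSubmodule P := by rw [hP, sup_eq_right.2 h1, hP]

variable {V : Type*} [AddCommMonoid V] [Module R V]

theorem apply_mul_prod_eq_zero_of_alternatingSpan_le_ker {G : A →ₗ[R] V} {S : Bool → Submodule R A}
    (hS : ∀ b, alternatingSpan (S !b) (S b) * S b ≤ LinearMap.ker G) (l : List (A × Bool)) :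
    ∀ (b : Bool) (x : A), x ∈ alternatingSpan (S !b) (S b) * S b →
      ((x, b) :: l).IsChain (fun p q => p.2 ≠ q.2) → (∀ p ∈ l, p.1 ∈ S p.2) →
      G (x * (l.map Prod.fst).prod) = 0 := by
  induction l with
  | nil => intro b x hx _ _; simpa using hS b hx
  | cons p l ih =>
    obtain ⟨y, b'⟩ := p
    intro b x hx hchain hl
    obtain ⟨hbb', hchain'⟩ := List.isChain_cons_cons.1 hchain
    obtain rfl : b = !b' := Bool.eq_not.2 hbb'
    have hxy : x * y ∈ alternatingSpan (S !b') (S b') * S b' :=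
      Submodule.mul_mem_mul (alternatingSpan_mul_le _ _ (by simpa using hx)) (hl (y, b') (by simp))
    have := ih b' (x * y) hxy (by simpa [List.isChain_cons] using hchain')
      fun p hp => hl p (List.mem_cons_of_mem _ hp)
    simpa [mul_assoc] using this

theorem apply_mul_prod_eq_zero_of_mem_alternatingPow {G : A →ₗ[R] V} {S : Bool → Submodule R A}
    (hG : ∀ l : List (A × Bool), l ≠ [] → l.IsChain (fun p q => p.2 ≠ q.2) →
      (∀ p ∈ l, p.1 ∈ S p.2) → G (l.map Prod.fst).prod = 0) (n : ℕ) :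
    ∀ (y : A) (b : Bool) (l : List (A × Bool)),
      ((y, b) :: l).IsChain (fun p q => p.2 ≠ q.2) → (∀ p ∈ (y, b) :: l, p.1 ∈ S p.2) →
      ∀ x ∈ alternatingPow (S !b) (S b) n, G (x * (((y, b) :: l).map Prod.fst).prod) = 0 := by
  induction n with
  | zero =>
    intro y b l hchain hl x hx
    obtain ⟨r, rfl⟩ := Submodule.mem_one.1 hx
    rw [← Algebra.smul_def, map_smul, hG _ (by simp) hchain hl, smul_zero]
  | succ n ih =>
    intro y b l hchain hl x hx
    induction hx using Submodule.mul_induction_on' with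
    | mem_mul_mem u hu z hz =>
      rw [mul_assoc]
      exact ih z (!b) ((y, b) :: l) (List.isChain_cons_cons.2 ⟨by simp, hchain⟩)
        (List.forall_mem_cons.2 ⟨hz, hl⟩) u (by simpa using hu)
    | add u _ v _ hu hv => rw [add_mul, map_add, hu, hv, add_zero]

theorem forall_alternating_iff_alternatingSpan_le_ker {G : A →ₗ[R] V} {S : Bool → Submodule R A} :
    (∀ l : List (A × Bool), l ≠ [] → l.IsChain (fun p q => p.2 ≠ q.2) →
      (∀ p ∈ l, p.1 ∈ S p.2) → G (l.map Prod.fst).prod = 0) ↔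
      ∀ b, alternatingSpan (S !b) (S b) * S b ≤ LinearMap.ker G := by
  constructor
  · intro hG b
    rw [alternatingSpan, Submodule.iSup_mul]
    refine iSup_le fun n => Submodule.mul_le.2 fun x hx y hy => ?_
    simpa using apply_mul_prod_eq_zero_of_mem_alternatingPow hG n y b [] (by simp)
      (by simpa using hy) x hx
  · rintro hS (_ | ⟨⟨x, b⟩, l⟩) hne hchain hl
    · exact absurd rfl hne
    · refine apply_mul_prod_eq_zero_of_alternatingSpan_le_ker hS l b x ?_ hchain
        fun p hp => hl p (List.mem_cons_of_mem _ hp)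
      simpa using Submodule.mul_mem_mul
        (Submodule.one_le.1 (one_le_alternatingSpan _ _)) (hl (x, b) (by simp))

end AlternatingSpan

/-- The submodule of the `E`-centered elements of `P`, that is, those annihilated by `E`. -/
def centeredPart {R A V : Type*} [CommSemiring R] [Semiring A] [Algebra R A] [AddCommMonoid V]
    [Module R V] (E : A →ₗ[R] V) (P : Subalgebra R A) : Submodule R A :=
  Subalgebra.toSubmodule P ⊓ LinearMap.ker E

section ConditionalExpectation

variable {R A : Type*} [CommRing R] [Ring A] [Algebra R A]

/-- `E` is a conditional expectation onto the unital subalgebra `B`, regarded as a map from the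
ambient algebra to itself. -/
structure IsConditionalExpectation (B : Subalgebra R A) (E : A →ₗ[R] A) : Prop where
  map_mem : ∀ m, E m ∈ B
  map_one : E 1 = 1
  map_mul_mul : ∀ b ∈ B, ∀ b' ∈ B, ∀ m, E (b * m * b') = b * E m * b'

namespace IsConditionalExpectation

variable {B C D : Subalgebra R A} {E EB EC : A →ₗ[R] A}

theorem map_mul_of_mem (hE : IsConditionalExpectation B E) (m : A) {b : A} (hb : b ∈ B) :
    E (m * b) = E m * b := by
  simpa using hE.map_mul_mul 1 B.one_mem b hb m

theorem apply_of_mem (hE : IsConditionalExpectation B E) {b : A} (hb : b ∈ B) : E b = b := by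
  simpa [hE.map_one] using hE.map_mul_of_mem 1 hb

theorem apply_apply (hE : IsConditionalExpectation B E) (m : A) : E (E m) = E m :=
  hE.apply_of_mem (hE.map_mem m)

theorem ker_mul_le (hE : IsConditionalExpectation B E) :
    LinearMap.ker E * Subalgebra.toSubmodule B ≤ LinearMap.ker E := by
  refine Submodule.mul_le.2 fun m hm b hb => ?_
  rw [LinearMap.mem_ker] at hm ⊢
  rw [hE.map_mul_of_mem m hb, hm, zero_mul]

theorem toSubmodule_le_centeredPart_sup (hE : IsConditionalExpectation B E) (hBC : B ≤ C) :
    Subalgebra.toSubmodule C ≤ centeredPart E C ⊔ Subalgebra.toSubmodule B := by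
  intro c hc
  rw [← sub_add_cancel c (E c)]
  exact Submodule.add_mem_sup
    ⟨C.sub_mem hc (hBC (hE.map_mem c)), by simp [hE.apply_apply]⟩ (hE.map_mem c)

theorem centeredPart_le_sup (hEC : IsConditionalExpectation C EC) (hCD : C ≤ D)
    (hcomp : ∀ m, EB (EC m) = EB m) :
    centeredPart EB D ≤ centeredPart EB C ⊔ centeredPart EC D := by
  rintro d ⟨hd, hd0⟩
  rw [← add_sub_cancel (EC d) d]
  exact Submodule.add_mem_sup ⟨hEC.map_mem d, by simpa [hcomp] using hd0⟩
    ⟨D.sub_mem hd (hCD (hEC.map_mem d)), by simp [hEC.apply_apply]⟩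

theorem le_ker_of_mul_le_ker (hEC : IsConditionalExpectation C EC)
    (hcomp : ∀ m, EB (EC m) = EB m)
    (hfaith : ∀ c ∈ C, (∀ c' ∈ C, EB (c * c') = 0) → c = 0) {X : Submodule R A}
    (hX : X * Subalgebra.toSubmodule C ≤ LinearMap.ker EB) : X ≤ LinearMap.ker EC := by
  intro x hx
  refine hfaith _ (hEC.map_mem x) fun c hc => ?_
  rw [← hEC.map_mul_of_mem x hc, hcomp]
  exact hX (Submodule.mul_mem_mul hx hc)

end IsConditionalExpectation

end ConditionalExpectation

section Freeness

variable {M : Type*} [Ring M] [Algebra ℂ M]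

theorem freeWithAmalgamation_iff_alternatingSpan {V : Type*} [Ring V] [Algebra ℂ V]
    {G : M →ₗ[ℂ] V} {P Q : Subalgebra ℂ M} :
    FreeWithAmalgamation (fun m => G m) P Q ↔
      alternatingSpan (centeredPart G Q) (centeredPart G P) * centeredPart G P ≤
          LinearMap.ker G ∧
        alternatingSpan (centeredPart G P) (centeredPart G Q) * centeredPart G Q ≤
          LinearMap.ker G := by
  have h : FreeWithAmalgamation (fun m => G m) P Q ↔ _ :=
    forall_alternating_iff_alternatingSpan_le_ker
      (S := fun b => centeredPart G (if b then P else Q))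
  simpa [and_comm] using h

theorem alternatingSpan_mul_centeredPart_le {A B C : Subalgebra ℂ M} {EB EC : M →ₗ[ℂ] M}
    (hBC : B ≤ C) (hEB : IsConditionalExpectation B EB) (hEC : IsConditionalExpectation C EC)
    (hcomp : ∀ m, EB (EC m) = EB m) (hfaith : ∀ c ∈ C, (∀ c' ∈ C, EB (c * c') = 0) → c = 0)
    (hAC : FreeWithAmalgamation (fun m => EB m) A C) {P : Subalgebra ℂ M} (hA : A ≤ P)
    (hC : C ≤ P) :
    alternatingSpan (centeredPart EB C) (centeredPart EB A) * centeredPart EB A ≤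
      centeredPart EC P := by
  obtain ⟨hA_ker, hC_ker⟩ := freeWithAmalgamation_iff_alternatingSpan.1 hAC
  set a := centeredPart EB A
  set c := centeredPart EB C
  refine le_inf ?_ (hEC.le_ker_of_mul_le_ker hcomp hfaith ?_)
  · exact (alternatingSpan_mul_le a c).trans
      (alternatingSpan_le_toSubmodule (inf_le_left.trans hA) (inf_le_left.trans hC))
  · calc alternatingSpan c a * a * Subalgebra.toSubmodule C
        ≤ alternatingSpan c a * a * (c ⊔ Subalgebra.toSubmodule B) := by
          gcongr; exact hEB.toSubmodule_le_centeredPart_sup hBC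
      _ = alternatingSpan c a * a * c ⊔ alternatingSpan c a * a * Subalgebra.toSubmodule B :=
          Submodule.mul_sup _ _ _
      _ ≤ alternatingSpan a c * c ⊔ LinearMap.ker EB * Subalgebra.toSubmodule B := by
          gcongr; exact alternatingSpan_mul_le a c
      _ ≤ LinearMap.ker EB := sup_le hC_ker hEB.ker_mul_le

theorem free_with_amalgamation_transitive_general {N B C D : Subalgebra ℂ M} (hBC : B ≤ C)
    (hCD : C ≤ D) {EB EC : M →ₗ[ℂ] M} (hEB : IsConditionalExpectation B EB)
    (hEC : IsConditionalExpectation C EC) (hcomp : ∀ m, EB (EC m) = EB m)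
    (hfaith : ∀ c ∈ C, (∀ c' ∈ C, EB (c * c') = 0) → c = 0)
    (hNC : FreeWithAmalgamation (fun m => EB m) (N ⊔ B) C)
    (hND : FreeWithAmalgamation (fun m => EC m) (N ⊔ C) D) :
    FreeWithAmalgamation (fun m => EB m) (N ⊔ B) D := by
  rw [freeWithAmalgamation_iff_alternatingSpan] at hND ⊢
  have hP := alternatingSpan_mul_centeredPart_le hBC hEB hEC hcomp hfaith hNC
    (sup_le_sup_left hBC N) le_sup_right
  have hD := hEC.centeredPart_le_sup hCD hcomp
  set a := centeredPart EB (N ⊔ B)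
  set c := centeredPart EB C
  set d := centeredPart EC D
  set p := centeredPart EC (N ⊔ C)
  set d' := centeredPart EB D
  have hker : LinearMap.ker EC ≤ LinearMap.ker EB := fun m hm => by
    simpa [LinearMap.mem_ker.1 hm] using (hcomp m).symm
  have ha : alternatingSpan d' a * a ≤ alternatingSpan d p * p := calc
    alternatingSpan d' a * a ≤ alternatingSpan d p * alternatingSpan c a * a := by
      gcongr; exact alternatingSpan_le_mul_of_le_sup hD hP
    _ ≤ alternatingSpan d p * p := by rw [mul_assoc]; gcongr
  have hc : alternatingSpan p d * c ≤ LinearMap.ker EB := calc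
    alternatingSpan p d * c = c ⊔ alternatingSpan d p * p * c := by
      rw [alternatingSpan_eq p d, Submodule.sup_mul, one_mul]
    _ ≤ c ⊔ LinearMap.ker EC * Subalgebra.toSubmodule C := by
      gcongr; exacts [hND.1, inf_le_left]
    _ ≤ LinearMap.ker EB := sup_le inf_le_right (hEC.ker_mul_le.trans hker)
  refine ⟨ha.trans (hND.1.trans hker), ?_⟩
  calc alternatingSpan a d' * d' ≤ alternatingSpan p d * (c ⊔ d) := by
        rw [alternatingSpan_eq a d', alternatingSpan_eq p d]; gcongr
    _ = alternatingSpan p d * c ⊔ alternatingSpan p d * d := Submodule.mul_sup _ _ _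
    _ ≤ LinearMap.ker EB := sup_le hc (hND.2.trans hker)

end Freeness

/-- Let `M` be a unital complex algebra, `N ⊆ M` a subalgebra and
`B ⊆ C ⊆ D ⊆ M` unital subalgebras with conditional expectations `E_B, E_C, E_D : M → M`
onto `B`, `C`, `D` respectively, satisfying `E_B = E_B ∘ E_C` and `E_C = E_C ∘ E_D`, and
the faithfulness conditions (i)–(iii).  If `N` is free from `C` with amalgamation over `B`
(w.r.t. `E_B`) and free from `D` with amalgamation over `C` (w.r.t. `E_C`), then `N` is
free from `D` with amalgamation over `B` (w.r.t. `E_B`).  (Here "`N` free from `P` over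
`A`" means: the subalgebra generated by `N` and `A` is free from `P` over `A`.) -/
theorem free_with_amalgamation_transitive
    {M : Type*} [Ring M] [Algebra ℂ M]
    (N B C D : Subalgebra ℂ M) (hBC : B ≤ C) (hCD : C ≤ D)
    (EB EC ED : M →ₗ[ℂ] M)
    (hEBr : ∀ m, EB m ∈ B) (hECr : ∀ m, EC m ∈ C) (hEDr : ∀ m, ED m ∈ D)
    (hEB1 : EB 1 = 1) (hEC1 : EC 1 = 1) (hED1 : ED 1 = 1)
    (hEBbi : ∀ b ∈ B, ∀ b' ∈ B, ∀ m : M, EB (b * m * b') = b * EB m * b')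
    (hECbi : ∀ c ∈ C, ∀ c' ∈ C, ∀ m : M, EC (c * m * c') = c * EC m * c')
    (hEDbi : ∀ d ∈ D, ∀ d' ∈ D, ∀ m : M, ED (d * m * d') = d * ED m * d')
    (hBCcomp : ∀ m, EB (EC m) = EB m) (hCDcomp : ∀ m, EC (ED m) = EC m)
    (hEBfaith : ∀ c ∈ C, (∀ c' ∈ C, EB (c * c') = 0) → c = 0)
    (hECfaith : ∀ d ∈ D, (∀ d' ∈ D, EC (d * d') = 0) → d = 0)
    (hEDfaith : ∀ m : M, (∀ m' : M, ED (m * m') = 0) → m = 0)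
    (hNC : FreeWithAmalgamation (fun m => EB m) (N ⊔ B) C)
    (hND : FreeWithAmalgamation (fun m => EC m) (N ⊔ C) D) :
    FreeWithAmalgamation (fun m => EB m) (N ⊔ B) D := by
  exact free_with_amalgamation_transitive_general hBC hCD ⟨hEBr, hEB1, hEBbi⟩ ⟨hECr, hEC1, hECbi⟩
    hBCcomp hEBfaith hNC hND
end
end

section
/- Let B be a unital complex algebra, (M, E : M → B) a B-probability space, D ⊆ B a unital subalgebra, and F : B → D a conditional expectation satisfying the faithfulness condition. Let X₁, …, Xₙ ∈ M and Z₁, …, Zₙ ∈ M be two families, each of which is free from B with amalgamation over D (with respect to F∘E). Assume the two families have the same D-valued joint distribution: F(E(d₀ X_{i₁} d₁ X_{i₂} d₂ ⋯ X_{i_k} d_k)) = F(E(d₀ Z_{i₁} d₁ Z_{i₂} d₂ ⋯ Z_{i_k} d_k)) for all k ≥ 1, all indices i₁, …, i_k ∈ {1, …, n} and all d₀, …, d_k ∈ D. Then they have the same B-valued joint distribution: E(b₀ X_{i₁} b₁ X_{i₂} b₂ ⋯ X_{i_k} b_k) = E(b₀ Z_{i₁} b₁ Z_{i₂} b₂ ⋯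 Z_{i_k} b_k) for all k ≥ 1, all indices i₁, …, i_k ∈ {1, …, n} and all b₀, …, b_k ∈ B. -/
open scoped Classical

noncomputable section

open OVFree

/-!
A free family of subalgebras over `D` spans, together with `D`, the alternating products of centered
elements: when two adjacent letters of a product lie in the same subalgebra, their product is an
element of `D` plus a centered element, and the product gets shorter. Hence a `D`-valued expectation
for which the family is free is determined by its restrictions to the members of the family.

To compare families `X` and `Z` in two `B`-probability spaces `(M₁, E₁)` and `(M₂, E₂)`, put
`Yᵢ = (Xᵢ, Zᵢ)` in `M₁ × M₂`, with `B` embedded diagonally. Both `F ∘ E₁` and `F ∘ E₂`, precomposed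
with the projections, make `Y` free from `B` over `D`, and they agree on `B` and on the algebra
generated by `Y` and `D`, hence on the algebra generated by `Y` and `B`. Multiplying a word on the
right by `c ∈ B` then gives `F (E₁(⋯) * c) = F (E₂(⋯) * c)`, and faithfulness removes `F`.
-/

namespace OVFree

section ConditionalExpectation

variable {R D B M M' : Type*} [CommSemiring R] [Semiring D] [Algebra R D] [Semiring B] [Algebra R B]
  [Semiring M] [Algebra R M] [Semiring M'] [Algebra R M']

/-- `E : M → B` is a conditional expectation over an arbitrary scalar ring: it is unital and
`B`-bilinear, where `B` acts on `M` through `ι`. -/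
structure IsConditionalExpectation (ι : B →ₐ[R] M) (E : M →ₗ[R] B) : Prop where
  map_one : E 1 = 1
  map_mul_mul : ∀ (b b' : B) (m : M), E (ι b * m * ι b') = b * E m * b'

namespace IsConditionalExpectation

variable {ι : B →ₐ[R] M} {E : M →ₗ[R] B}

theorem map_mul_left (hE : IsConditionalExpectation ι E) (b : B) (m : M) :
    E (ι b * m) = b * E m := by
  simpa using hE.map_mul_mul b 1 m

theorem map_mul_right (hE : IsConditionalExpectation ι E) (m : M) (b : B) :
    E (m * ι b) = E m * b := by
  simpa using hE.map_mul_mul 1 b m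

theorem apply_algHom (hE : IsConditionalExpectation ι E) (b : B) : E (ι b) = b := by
  simpa [hE.map_one] using hE.map_mul_left b 1

theorem comp {j : D →ₐ[R] B} {F : B →ₗ[R] D} (hF : IsConditionalExpectation j F)
    (hE : IsConditionalExpectation ι E) : IsConditionalExpectation (ι.comp j) (F ∘ₗ E) where
  map_one := by simp [hE.map_one, hF.map_one]
  map_mul_mul d d' m := by simp [hE.map_mul_mul, hF.map_mul_mul]

theorem comp_algHom {φ : B →ₐ[R] M'} {f : M' →ₐ[R] M}
    (hE : IsConditionalExpectation (f.comp φ) E) :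
    IsConditionalExpectation φ (E ∘ₗ f.toLinearMap) where
  map_one := by simp [hE.map_one]
  map_mul_mul b b' m := by simpa using hE.map_mul_mul b b' (f m)

theorem codRestrict {S : Subalgebra R B} {F : B →ₗ[R] B} (hFS : ∀ b, F b ∈ S)
    (hF_one : F 1 = 1)
    (hF_bimod : ∀ d ∈ S, ∀ d' ∈ S, ∀ b : B, F (d * b * d') = d * F b * d') :
    IsConditionalExpectation S.val (F.codRestrict (Subalgebra.toSubmodule S) hFS) where
  map_one := Subtype.ext hF_one
  map_mul_mul d d' b := Subtype.ext (hF_bimod d d.2 d' d'.2 b)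

end IsConditionalExpectation

end ConditionalExpectation

section AlternatingWord

variable {κ A A' : Type*}

/-- The alternating words of free probability: each letter carries the index `i` of the set `K i` it
is taken from, and neighbouring letters have distinct indices. The index is recorded because the
sets may overlap. -/
def IsAlternating (K : κ → Set A) (w : List (A × κ)) : Prop :=
  w.IsChain (fun p q => p.2 ≠ q.2) ∧ ∀ p ∈ w, p.1 ∈ K p.2

theorem isAlternating_nil (K : κ → Set A) : IsAlternating K [] := by
  simp [IsAlternating]

theorem isAlternating_cons {K : κ → Set A} {a : A} {i : κ} {w : List (A × κ)} :
    IsAlternating K ((a, i) :: w) ↔ a ∈ K i ∧ (∀ q ∈ w.head?, i ≠ q.2) ∧ IsAlternating K w := by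
  simp only [IsAlternating, List.isChain_cons, List.forall_mem_cons]
  tauto

theorem IsAlternating.map {K : κ → Set A} {K' : κ → Set A'} {f : A → A'} {w : List (A × κ)}
    (hw : IsAlternating K w) (hf : ∀ i, Set.MapsTo f (K i) (K' i)) :
    IsAlternating K' (w.map (Prod.map f id)) := by
  refine ⟨(List.isChain_map _).2 hw.1, fun q hq => ?_⟩
  obtain ⟨p, hp, rfl⟩ := List.mem_map.1 hq
  exact hf _ (hw.2 p hp)

end AlternatingWord

section FreeFamily

variable {R κ A A' S S' : Type*} [CommSemiring R] [Semiring A] [Algebra R A] [Semiring A']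
  [Algebra R A'] [AddCommMonoid S] [Module R S] [AddCommMonoid S'] [Module R S']

/-- The elements of the `i`-th subalgebra that are centered for the expectation `ψ`; freeness is a
condition on their alternating products. -/
def centered (ψ : A →ₗ[R] S) (𝒜 : κ → Subalgebra R A) (i : κ) : Set A :=
  {a | a ∈ 𝒜 i ∧ ψ a = 0}

/-- Freeness of a family of subalgebras with respect to an expectation `ψ`. The algebra `D` of
amalgamation does not appear: it only enters through the requirement that `ψ` be `D`-valued, and is
a subset of `S` when `ψ` takes its values in a larger algebra. -/
def IsFreeFamily (ψ : A →ₗ[R] S) (𝒜 : κ → Subalgebra R A) : Prop :=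
  ∀ w : List (A × κ), w ≠ [] → IsAlternating (centered ψ 𝒜) w → ψ (w.map Prod.fst).prod = 0

theorem isFreeFamily_comp_left_iff {g : S →ₗ[R] S'} (hg : Function.Injective g)
    {ψ : A →ₗ[R] S} {𝒜 : κ → Subalgebra R A} :
    IsFreeFamily (g ∘ₗ ψ) 𝒜 ↔ IsFreeFamily ψ 𝒜 := by
  have hcentered : centered (g ∘ₗ ψ) 𝒜 = centered ψ 𝒜 := by
    ext i a
    simp only [centered, Set.mem_ofPred_eq, LinearMap.comp_apply, map_eq_zero_iff g hg]
  simp only [IsFreeFamily, hcentered, LinearMap.comp_apply, map_eq_zero_iff g hg]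

theorem IsFreeFamily.comp_algHom {ψ : A →ₗ[R] S} {𝒜 : κ → Subalgebra R A}
    {𝒜' : κ → Subalgebra R A'} {f : A' →ₐ[R] A} (hfree : IsFreeFamily ψ 𝒜)
    (hf : ∀ i, (𝒜' i).map f ≤ 𝒜 i) : IsFreeFamily (ψ ∘ₗ f.toLinearMap) 𝒜' := by
  intro w hw₀ hw
  have hfw : IsAlternating (centered ψ 𝒜) (w.map (Prod.map f id)) :=
    hw.map fun i a ha => ⟨hf i ⟨a, ha.1, rfl⟩, ha.2⟩
  simpa [map_list_prod, Function.comp_def] using hfree _ (by simpa using hw₀) hfw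

end FreeFamily

section SpanAlternating

variable {R κ D A : Type*} [CommRing R] [Ring D] [Algebra R D] [Ring A] [Algebra R A]
  {φ : D →ₐ[R] A} {ψ : A →ₗ[R] D} {𝒜 : κ → Subalgebra R A}

/-- The span of `D` and the alternating products of centered elements: the reduced words of the free
product with amalgamation over `D`, evaluated in `A`. -/
def alternatingSpan (φ : D →ₐ[R] A) (ψ : A →ₗ[R] D) (𝒜 : κ → Subalgebra R A) : Submodule R A :=
  Subalgebra.toSubmodule φ.range ⊔ Submodule.span R
    {a | ∃ w : List (A × κ), w ≠ [] ∧ IsAlternating (centered ψ 𝒜) w ∧ (w.map Prod.fst).prod = a}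

theorem algHom_mem_alternatingSpan (d : D) : φ d ∈ alternatingSpan φ ψ 𝒜 :=
  Submodule.mem_sup_left ⟨d, rfl⟩

theorem prod_mem_alternatingSpan {w : List (A × κ)} (hw : IsAlternating (centered ψ 𝒜) w) :
    (w.map Prod.fst).prod ∈ alternatingSpan φ ψ 𝒜 := by
  rcases eq_or_ne w [] with rfl | hw₀
  · simpa using algHom_mem_alternatingSpan (φ := φ) (ψ := ψ) (𝒜 := 𝒜) 1
  · exact Submodule.mem_sup_right (Submodule.subset_span ⟨w, hw₀, hw, rfl⟩)

theorem algHom_mul_prod_mem_alternatingSpan (hψ : IsConditionalExpectation φ ψ)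
    (hφ : ∀ i, φ.range ≤ 𝒜 i) (d : D) {w : List (A × κ)} (hw : IsAlternating (centered ψ 𝒜) w) :
    φ d * (w.map Prod.fst).prod ∈ alternatingSpan φ ψ 𝒜 := by
  rcases w with _ | ⟨⟨a, i⟩, w⟩
  · simpa using algHom_mem_alternatingSpan d
  · obtain ⟨⟨ha, ha₀⟩, hhead, hw⟩ := isAlternating_cons.1 hw
    have hda : φ d * a ∈ centered ψ 𝒜 i :=
      ⟨mul_mem (hφ i ⟨d, rfl⟩) ha, by rw [hψ.map_mul_left, ha₀, mul_zero]⟩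
    simpa [mul_assoc] using
      prod_mem_alternatingSpan (φ := φ) (isAlternating_cons.2 ⟨hda, hhead, hw⟩)

theorem sub_expectation_mem_centered (hψ : IsConditionalExpectation φ ψ)
    {i : κ} (hφ : φ.range ≤ 𝒜 i) {a : A} (ha : a ∈ 𝒜 i) : a - φ (ψ a) ∈ centered ψ 𝒜 i :=
  ⟨sub_mem ha (hφ ⟨ψ a, rfl⟩), by rw [map_sub, hψ.apply_algHom, sub_self]⟩

theorem mul_prod_mem_alternatingSpan_of_head_ne (hψ : IsConditionalExpectation φ ψ)
    (hφ : ∀ i, φ.range ≤ 𝒜 i) {i : κ} {a : A} (ha : a ∈ 𝒜 i) {w : List (A × κ)}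
    (hhead : ∀ q ∈ w.head?, i ≠ q.2) (hw : IsAlternating (centered ψ 𝒜) w) :
    a * (w.map Prod.fst).prod ∈ alternatingSpan φ ψ 𝒜 := by
  have hcentered : (a - φ (ψ a)) * (w.map Prod.fst).prod ∈ alternatingSpan φ ψ 𝒜 := by
    simpa using prod_mem_alternatingSpan (φ := φ)
      (isAlternating_cons.2 ⟨sub_expectation_mem_centered hψ (hφ i) ha, hhead, hw⟩)
  simpa [sub_mul] using
    add_mem hcentered (algHom_mul_prod_mem_alternatingSpan hψ hφ (ψ a) hw)

theorem mul_prod_mem_alternatingSpan (hψ : IsConditionalExpectation φ ψ)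
    (hφ : ∀ i, φ.range ≤ 𝒜 i) {i : κ} {a : A} (ha : a ∈ 𝒜 i) {w : List (A × κ)}
    (hw : IsAlternating (centered ψ 𝒜) w) :
    a * (w.map Prod.fst).prod ∈ alternatingSpan φ ψ 𝒜 := by
  by_cases hhead : ∀ q ∈ w.head?, i ≠ q.2
  · exact mul_prod_mem_alternatingSpan_of_head_ne hψ hφ ha hhead hw
  · rcases w with _ | ⟨⟨a', i'⟩, w⟩
    · simp at hhead
    · obtain rfl : i = i' := by simpa using hhead
      obtain ⟨ha', hhead', hw⟩ := isAlternating_cons.1 hw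
      simpa [mul_assoc] using
        mul_prod_mem_alternatingSpan_of_head_ne hψ hφ (mul_mem ha ha'.1) hhead' hw

theorem mul_mem_alternatingSpan (hψ : IsConditionalExpectation φ ψ) (hφ : ∀ i, φ.range ≤ 𝒜 i)
    {i : κ} {a v : A} (ha : a ∈ 𝒜 i) (hv : v ∈ alternatingSpan φ ψ 𝒜) :
    a * v ∈ alternatingSpan φ ψ 𝒜 := by
  suffices alternatingSpan φ ψ 𝒜 ≤ (alternatingSpan φ ψ 𝒜).comap (LinearMap.mulLeft R a) from
    this hv
  refine sup_le ?_ (Submodule.span_le.2 ?_)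
  · rintro _ ⟨d, rfl⟩
    simpa using
      mul_prod_mem_alternatingSpan hψ hφ (mul_mem ha (hφ i ⟨d, rfl⟩)) (isAlternating_nil _)
  · rintro _ ⟨w, -, hw, rfl⟩
    exact mul_prod_mem_alternatingSpan hψ hφ ha hw

theorem iSup_le_alternatingSpan (hψ : IsConditionalExpectation φ ψ) (hφ : ∀ i, φ.range ≤ 𝒜 i) :
    Subalgebra.toSubmodule (⨆ i, 𝒜 i) ≤ alternatingSpan φ ψ 𝒜 := by
  intro a ha
  have hmul : ∀ v ∈ alternatingSpan φ ψ 𝒜, a * v ∈ alternatingSpan φ ψ 𝒜 := by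
    refine Algebra.iSup_induction 𝒜
      (motive := fun a => ∀ v ∈ alternatingSpan φ ψ 𝒜, a * v ∈ alternatingSpan φ ψ 𝒜) ha
      (fun i a ha v => mul_mem_alternatingSpan hψ hφ ha) ?_ ?_ ?_
    · exact fun a b iha ihb v hv => by rw [add_mul]; exact add_mem (iha v hv) (ihb v hv)
    · exact fun a b iha ihb v hv => by rw [mul_assoc]; exact iha _ (ihb v hv)
    · exact fun r v hv => by rw [← Algebra.smul_def]; exact Submodule.smul_mem _ r hv
  simpa using hmul 1 (prod_mem_alternatingSpan (isAlternating_nil _))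

theorem IsFreeFamily.eqOn_iSup [Nonempty κ] {ψ' : A →ₗ[R] D} (hfree : IsFreeFamily ψ 𝒜)
    (hfree' : IsFreeFamily ψ' 𝒜) (hψ : IsConditionalExpectation φ ψ)
    (hφ : ∀ i, φ.range ≤ 𝒜 i) (heq : ∀ i, Set.EqOn ψ ψ' (𝒜 i)) :
    Set.EqOn ψ ψ' (⨆ i, 𝒜 i : Subalgebra R A) := by
  suffices alternatingSpan φ ψ 𝒜 ≤ LinearMap.eqLocus ψ ψ' from
    fun a ha => this (iSup_le_alternatingSpan hψ hφ ha)
  refine sup_le (fun a ha => heq (Classical.arbitrary κ) (hφ _ ha)) (Submodule.span_le.2 ?_)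
  rintro _ ⟨w, hw₀, hw, rfl⟩
  have hw' : IsAlternating (centered ψ' 𝒜) w :=
    ⟨hw.1, fun p hp => ⟨(hw.2 p hp).1, (heq _ (hw.2 p hp).1).symm.trans (hw.2 p hp).2⟩⟩
  exact (hfree w hw₀ hw).trans (hfree' w hw₀ hw').symm

end SpanAlternating

section Words

theorem exists_eq_map_finRange_succ {α β : Type*} (b : β) {w : List (α × β)} (hw : w ≠ []) :
    ∃ (k : ℕ) (i : Fin (k + 1) → α) (c : Fin (k + 2) → β),
      c 0 = b ∧ (List.finRange (k + 1)).map (fun j => (i j, c j.succ)) = w := by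
  obtain ⟨p, t, rfl⟩ := List.exists_cons_of_ne_nil hw
  exact ⟨t.length, fun j => ((p :: t).get j).1, Fin.cons b fun j => ((p :: t).get j).2, rfl,
    List.map_get_finRange (p :: t)⟩

variable {R D B M M' I : Type*} [CommSemiring R] [Semiring D] [Algebra R D] [Semiring B]
  [Algebra R B] [Semiring M] [Algebra R M] [Semiring M'] [Algebra R M']

/-- The word `b X_{i₁} b₁ ⋯ X_{i_k} b_k` with `w = [(i₁, b₁), …, (i_k, b_k)]`. -/
def word (ι : B →ₐ[R] M) (X : I → M) (b : B) (w : List (I × B)) : M :=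
  ι b * (w.map fun p => X p.1 * ι p.2).prod

theorem map_word (f : M →ₐ[R] M') (ι : B →ₐ[R] M) (X : I → M) (b : B) (w : List (I × B)) :
    f (word ι X b w) = word (f.comp ι) (f ∘ X) b w := by
  simp [word, map_list_prod, Function.comp_def]

theorem word_prod (ι : B →ₐ[R] M) (ι' : B →ₐ[R] M') (X : I → M) (X' : I → M') (b : B)
    (w : List (I × B)) :
    word (ι.prod ι') (fun i => (X i, X' i)) b w = (word ι X b w, word ι' X' b w) :=
  Prod.ext (map_word (AlgHom.fst R M M') (ι.prod ι') (fun i => (X i, X' i)) b w)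
    (map_word (AlgHom.snd R M M') (ι.prod ι') (fun i => (X i, X' i)) b w)

theorem prod_cons_map_finRange_eq_word (ι : B →ₐ[R] M) (X : I → M) {k : ℕ}
    (i : Fin (k + 1) → I) (b : Fin (k + 2) → B) :
    (ι (b 0) :: (List.finRange (k + 1)).map fun j => X (i j) * ι (b j.succ)).prod =
      word ι X (b 0) ((List.finRange (k + 1)).map fun j => (i j, b j.succ)) := by
  simp [word, Function.comp_def]

theorem adjoin_le_span_range_word (φ : D →ₐ[R] M) (X : I → M) :
    Subalgebra.toSubmodule (Algebra.adjoin R (Set.range X ∪ Set.range φ)) ≤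
      Submodule.span R (Set.range fun p : D × List (I × D) => word φ X p.1 p.2) := by
  rw [Algebra.adjoin_eq_span]
  refine Submodule.span_mono fun a ha => ?_
  induction ha using Submonoid.closure_induction_left with
  | one => exact ⟨(1, []), by simp [word]⟩
  | mul_left x hx y _ ih =>
    obtain ⟨⟨d, w⟩, rfl⟩ := ih
    rcases hx with ⟨i, rfl⟩ | ⟨e, rfl⟩
    · exact ⟨(1, (i, d) :: w), by simp [word, mul_assoc]⟩
    · exact ⟨(e * d, w), by simp [word, mul_assoc]⟩

/-- The two subalgebras of `M` whose freeness over `D` means that `X` is free from `B` with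
amalgamation over `D`: the one generated by `X` and `D` (at `true`), and `B` (at `false`). -/
def generatedAndBase (ι : B →ₐ[R] M) (j : D →ₐ[R] B) (X : I → M) : Bool → Subalgebra R M
  | true => Algebra.adjoin R (Set.range X ∪ Set.range (ι.comp j))
  | false => ι.range

theorem map_generatedAndBase (f : M →ₐ[R] M') (ι : B →ₐ[R] M) (j : D →ₐ[R] B) (X : I → M)
    (s : Bool) :
    (generatedAndBase ι j X s).map f = generatedAndBase (f.comp ι) j (f ∘ X) s := by
  cases s
  · exact (AlgHom.range_comp ι f).symm
  · simp only [generatedAndBase, AlgHom.map_adjoin, Set.image_union, ← Set.range_comp,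
      AlgHom.coe_comp, Function.comp_assoc]

theorem range_comp_le_generatedAndBase (ι : B →ₐ[R] M) (j : D →ₐ[R] B) (X : I → M) (s : Bool) :
    (ι.comp j).range ≤ generatedAndBase ι j X s := by
  cases s
  · exact AlgHom.range_comp_le_range j ι
  · exact fun _ ha => Algebra.subset_adjoin (Or.inr ha)

theorem word_mem_iSup_generatedAndBase (ι : B →ₐ[R] M) (j : D →ₐ[R] B) (X : I → M) (b : B)
    (w : List (I × B)) : word ι X b w ∈ ⨆ s, generatedAndBase ι j X s := by
  have hX (i : I) : X i ∈ ⨆ s, generatedAndBase ι j X s :=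
    Algebra.mem_iSup_of_mem true (Algebra.subset_adjoin (Or.inl ⟨i, rfl⟩))
  have hι (b : B) : ι b ∈ ⨆ s, generatedAndBase ι j X s :=
    Algebra.mem_iSup_of_mem false ⟨b, rfl⟩
  refine mul_mem (hι b) (list_prod_mem fun a ha => ?_)
  obtain ⟨p, -, rfl⟩ := List.mem_map.1 ha
  exact mul_mem (hX p.1) (hι p.2)

end Words

theorem FreeWithAmalgamation.isFreeFamily {B M I : Type*} [Ring B] [Algebra ℂ B] [Ring M]
    [Algebra ℂ M] {ι : B →ₐ[ℂ] M} {E : M →ₗ[ℂ] B} {D : Subalgebra ℂ B} {F : B →ₗ[ℂ] B}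
    (hFD : ∀ b, F b ∈ D) {X : I → M}
    (hfree : FreeWithAmalgamation (fun m => F (E m))
      (Algebra.adjoin ℂ (Set.range X ∪ (ι '' (D : Set B)))) ι.range) :
    IsFreeFamily (F.codRestrict (Subalgebra.toSubmodule D) hFD ∘ₗ E)
      (generatedAndBase ι D.val X) := by
  have hrange : Set.range (ι.comp D.val) = ι '' (D : Set B) := by
    rw [AlgHom.coe_comp, Set.range_comp, Subalgebra.coe_val, Subtype.range_coe]
  refine (isFreeFamily_comp_left_iff (g := D.val.toLinearMap) Subtype.val_injective).1 ?_
  refine fun w hw₀ hw => hfree w hw₀ hw.1 fun p hp => ?_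
  obtain ⟨a, s⟩ := p
  obtain ⟨ha, ha₀⟩ := hw.2 _ hp
  refine ⟨?_, ha₀⟩
  cases s
  · exact ha
  · simpa only [generatedAndBase, hrange, if_true] using ha

section Uniqueness

variable {R D B M M₁ M₂ I : Type*} [CommRing R] [Ring D] [Algebra R D] [Semiring B]
  [Algebra R B] [Ring M] [Algebra R M] [Ring M₁] [Algebra R M₁] [Ring M₂] [Algebra R M₂]

theorem eqOn_iSup_generatedAndBase {ι : B →ₐ[R] M} {j : D →ₐ[R] B} {Y : I → M}
    {ψ₁ ψ₂ : M →ₗ[R] D} (hψ : IsConditionalExpectation (ι.comp j) ψ₁)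
    (hfree₁ : IsFreeFamily ψ₁ (generatedAndBase ι j Y))
    (hfree₂ : IsFreeFamily ψ₂ (generatedAndBase ι j Y))
    (hbase : ∀ b, ψ₁ (ι b) = ψ₂ (ι b))
    (hword : ∀ d w, ψ₁ (word (ι.comp j) Y d w) = ψ₂ (word (ι.comp j) Y d w)) :
    Set.EqOn ψ₁ ψ₂ (⨆ s, generatedAndBase ι j Y s : Subalgebra R M) := by
  refine hfree₁.eqOn_iSup hfree₂ hψ (range_comp_le_generatedAndBase ι j Y) fun s => ?_
  cases s with
  | false => rintro _ ⟨b, rfl⟩; exact hbase b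
  | true =>
    have hspan : Submodule.span R (Set.range fun p : D × List (I × D) =>
        word (ι.comp j) Y p.1 p.2) ≤ LinearMap.eqLocus ψ₁ ψ₂ :=
      Submodule.span_le.2 (by rintro _ ⟨⟨d, w⟩, rfl⟩; exact hword d w)
    exact fun a ha => hspan (adjoin_le_span_range_word (ι.comp j) Y ha)

variable {ι₁ : B →ₐ[R] M₁} {ι₂ : B →ₐ[R] M₂} {E₁ : M₁ →ₗ[R] B} {E₂ : M₂ →ₗ[R] B}
  {j : D →ₐ[R] B} {F : B →ₗ[R] D} {X : I → M₁} {Z : I → M₂}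

theorem expectation_word_eq_of_isFreeFamily (hE₁ : IsConditionalExpectation ι₁ E₁)
    (hE₂ : IsConditionalExpectation ι₂ E₂) (hF : IsConditionalExpectation j F)
    (hXfree : IsFreeFamily (F ∘ₗ E₁) (generatedAndBase ι₁ j X))
    (hZfree : IsFreeFamily (F ∘ₗ E₂) (generatedAndBase ι₂ j Z))
    (hword : ∀ d w, F (E₁ (word (ι₁.comp j) X d w)) = F (E₂ (word (ι₂.comp j) Z d w)))
    (b : B) (w : List (I × B)) (c : B) :
    F (E₁ (word ι₁ X b w * ι₁ c)) = F (E₂ (word ι₂ Z b w * ι₂ c)) := by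
  let p₁ := AlgHom.fst R M₁ M₂
  let p₂ := AlgHom.snd R M₁ M₂
  let ι := ι₁.prod ι₂
  let Y : I → M₁ × M₂ := fun i => (X i, Z i)
  have hψ : IsConditionalExpectation (ι.comp j) ((F ∘ₗ E₁) ∘ₗ p₁.toLinearMap) :=
    IsConditionalExpectation.comp_algHom (f := p₁) (hF.comp hE₁)
  have hYfree₁ : IsFreeFamily ((F ∘ₗ E₁) ∘ₗ p₁.toLinearMap) (generatedAndBase ι j Y) :=
    hXfree.comp_algHom fun s => (map_generatedAndBase p₁ ι j Y s).le
  have hYfree₂ : IsFreeFamily ((F ∘ₗ E₂) ∘ₗ p₂.toLinearMap) (generatedAndBase ι j Y) :=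
    hZfree.comp_algHom fun s => (map_generatedAndBase p₂ ι j Y s).le
  have hbase (b : B) : F (E₁ (ι₁ b)) = F (E₂ (ι₂ b)) := by
    rw [hE₁.apply_algHom, hE₂.apply_algHom]
  have hYword (d : D) (w : List (I × D)) :
      F (E₁ (word (ι.comp j) Y d w).1) = F (E₂ (word (ι.comp j) Y d w).2) := by
    rw [show ι.comp j = (ι₁.comp j).prod (ι₂.comp j) from rfl, word_prod]
    exact hword d w
  have hmem : word ι Y b w * ι c ∈ ⨆ s, generatedAndBase ι j Y s :=
    mul_mem (word_mem_iSup_generatedAndBase ι j Y b w) (Algebra.mem_iSup_of_mem false ⟨c, rfl⟩)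
  rw [word_prod] at hmem
  exact eqOn_iSup_generatedAndBase hψ hYfree₁ hYfree₂ hbase hYword hmem

end Uniqueness

end OVFree

theorem same_D_distribution_implies_same_B_distribution_of_free_general
    {R D B M₁ M₂ I : Type*} [CommRing R] [Ring D] [Algebra R D] [Ring B] [Algebra R B]
    [Ring M₁] [Algebra R M₁] [Ring M₂] [Algebra R M₂]
    {ι₁ : B →ₐ[R] M₁} {E₁ : M₁ →ₗ[R] B} (hE₁ : IsConditionalExpectation ι₁ E₁)
    {ι₂ : B →ₐ[R] M₂} {E₂ : M₂ →ₗ[R] B} (hE₂ : IsConditionalExpectation ι₂ E₂)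
    {j : D →ₐ[R] B} {F : B →ₗ[R] D} (hF : IsConditionalExpectation j F)
    (hFfaithful : ∀ b₁ : B, (∀ b₂ : B, F (b₁ * b₂) = 0) → b₁ = 0)
    {X : I → M₁} (hXfree : IsFreeFamily (F ∘ₗ E₁) (generatedAndBase ι₁ j X))
    {Z : I → M₂} (hZfree : IsFreeFamily (F ∘ₗ E₂) (generatedAndBase ι₂ j Z))
    (hsame : ∀ (k : ℕ) (i : Fin (k + 1) → I) (d : Fin (k + 2) → D),
      F (E₁ ((ι₁ (j (d 0)) ::
          (List.finRange (k + 1)).map fun l => X (i l) * ι₁ (j (d l.succ))).prod))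
        = F (E₂ ((ι₂ (j (d 0)) ::
          (List.finRange (k + 1)).map fun l => Z (i l) * ι₂ (j (d l.succ))).prod)))
    (k : ℕ) (i : Fin (k + 1) → I) (b : Fin (k + 2) → B) :
    E₁ ((ι₁ (b 0) :: (List.finRange (k + 1)).map fun l => X (i l) * ι₁ (b l.succ)).prod)
      = E₂ ((ι₂ (b 0) :: (List.finRange (k + 1)).map fun l => Z (i l) * ι₂ (b l.succ)).prod) := by
  have hword (d : D) (w : List (I × D)) :
      F (E₁ (word (ι₁.comp j) X d w)) = F (E₂ (word (ι₂.comp j) Z d w)) := by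
    rcases eq_or_ne w [] with rfl | hw
    · simp [word, hE₁.apply_algHom, hE₂.apply_algHom]
    · obtain ⟨k, i, c, rfl, rfl⟩ := exists_eq_map_finRange_succ d hw
      simpa only [← prod_cons_map_finRange_eq_word, AlgHom.comp_apply] using hsame k i c
  simp only [prod_cons_map_finRange_eq_word]
  refine sub_eq_zero.1 (hFfaithful _ fun c => ?_)
  rw [sub_mul, map_sub, ← hE₁.map_mul_right, ← hE₂.map_mul_right, sub_eq_zero]
  exact expectation_word_eq_of_isFreeFamily hE₁ hE₂ hF hXfree hZfree hword _ _ c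

/-- Let `(M, E : M → B)` be a `B`-probability space (with `ι : B → M` the
inclusion of `B` as a unital subalgebra), `D ⊆ B` a unital subalgebra and `F : B → D` a
conditional expectation satisfying the faithfulness condition.  Let `X₁, …, X_N` and
`Z₁, …, Z_N` be two families in `M`, each free from `B` with amalgamation over `D` (with
respect to `F∘E`).  If the two families have the same `D`-valued joint distribution
(`F∘E` applied to words `d₀ X_{i₁} d₁ ⋯ X_{i_k} d_k` with `dⱼ ∈ D` agree), then they have
the same `B`-valued joint distribution (`E` applied to words `b₀ X_{i₁} b₁ ⋯ X_{i_k} b_k`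
with `bⱼ ∈ B` agree).  Words are encoded as ordered list products, `k ≥ 1` being encoded
as `k + 1` `X`-factors. -/
theorem same_D_distribution_implies_same_B_distribution_of_free
    {B M : Type*} [Ring B] [Algebra ℂ B] [Ring M] [Algebra ℂ M]
    (ι : B →ₐ[ℂ] M) (hι : Function.Injective ι)
    (E : M →ₗ[ℂ] B) (hE : IsCondExp ι E)
    (D : Subalgebra ℂ B)
    (F : B →ₗ[ℂ] B) (hFD : ∀ b, F b ∈ D) (hFid : ∀ d ∈ D, F d = d)
    (hFbimod : ∀ d ∈ D, ∀ d' ∈ D, ∀ b : B, F (d * b * d') = d * F b * d')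
    (hFfaithful : ∀ b₁ : B, (∀ b₂ : B, F (b₁ * b₂) = 0) → b₁ = 0)
    {N : ℕ} (X Z : Fin N → M)
    (hXfree : FreeWithAmalgamation (fun m => F (E m))
      (Algebra.adjoin ℂ (Set.range X ∪ (ι '' (D : Set B)))) ι.range)
    (hZfree : FreeWithAmalgamation (fun m => F (E m))
      (Algebra.adjoin ℂ (Set.range Z ∪ (ι '' (D : Set B)))) ι.range)
    (hsame : ∀ (k : ℕ) (i : Fin (k + 1) → Fin N) (d : Fin (k + 2) → ↥D),
      F (E ((ι (d 0) ::
          (List.finRange (k + 1)).map fun j => X (i j) * ι ((d j.succ : B))).prod))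
        = F (E ((ι (d 0) ::
          (List.finRange (k + 1)).map fun j => Z (i j) * ι ((d j.succ : B))).prod))) :
    ∀ (k : ℕ) (i : Fin (k + 1) → Fin N) (b : Fin (k + 2) → B),
      E ((ι (b 0) :: (List.finRange (k + 1)).map fun j => X (i j) * ι (b j.succ)).prod)
        = E ((ι (b 0) :: (List.finRange (k + 1)).map fun j => Z (i j) * ι (b j.succ)).prod) := by
  exact same_D_distribution_implies_same_B_distribution_of_free_general ⟨hE.1, hE.2⟩ ⟨hE.1, hE.2⟩
    (.codRestrict hFD (hFid 1 D.one_mem) hFbimod)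
    (fun b hb => hFfaithful b fun c => congrArg Subtype.val (hb c))
    (hXfree.isFreeFamily hFD) (hZfree.isFreeFamily hFD) fun k i d => Subtype.ext (hsame k i d)
end
end
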